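/- Let f : [0,1] → [0,1] be continuous, strictly monotonically increasing, with f(0) = 0. Then there exists a monotone function g : ℕ → ℕ such that: (i) C_g is realizably PAC learnable with sample complexity m(ε,δ) ≤ log(1/δ)·g(1/ε); (ii) C_g is not adaptively additively f-robustly learnable, and there is an adaptive additive adversary that is a universal f-adversary for C_g; (iii) C_g is not adaptively subtractively f-robustly learnable, and there is an adaptive subtractive adversary that is a universal f-adversary for C_g. -/

import Mathlib

open scoped ENNReal NNReal

/-- Total variation distance between two discrete distributions. -/
noncomputable def tv {X : Type*} (p q : PMF X) : ℝ :=
  (∑' x, |(p x).toReal - (q x).toReal|) / 2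

/-- The distribution of an i.i.d. sample of size `m` from `p`, viewed as a multiset. -/
noncomputable def iid {X : Type*} (p : PMF X) : ℕ → PMF (Multiset X)
  | 0 => PMF.pure 0
  | n + 1 => (iid p n).bind fun s => p.map fun x => x ::ₘ s

/-- `|Q|^m` : first draw `q ∼ Q`, then an i.i.d. sample `S ∼ q^m`. -/
noncomputable def metaSample {X : Type*} (Q : PMF (PMF X)) (m : ℕ) : PMF (Multiset X) :=
  Q.bind fun q => iid q m

/-- An adaptive adversary: a randomized map from samples (finite multisets) to samples. -/
abbrev Adversary (X : Type*) := Multiset X → PMF (Multiset X)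

/-- `V(P)`: the distribution of `V S` for `S ∼ P` (including internal randomness). -/
noncomputable def advPush {X : Type*} (V : Adversary X) (P : PMF (Multiset X)) :
    PMF (Multiset X) := P.bind V

/-- An additive adversary only adds points: `S ⊆ V(S)` almost surely. -/
def IsAdditive {X : Type*} (V : Adversary X) : Prop :=
  ∀ S T, T ∈ (V S).support → S ≤ T

/-- A subtractive adversary only removes points: `V(S) ⊆ S` almost surely. -/
def IsSubtractive {X : Type*} (V : Adversary X) : Prop :=
  ∀ S T, T ∈ (V S).support → T ≤ S

/-- Fixed constant budget `η`: `|V(S)|` depends only on `|S|` (via `c`), and for every `m`,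
`η m − 1 < m·budget(V,m) ≤ η m` where `m·budget(V,m) = ||V(S)| − |S||`. -/
def FixedBudget {X : Type*} (V : Adversary X) (η : ℝ) : Prop :=
  ∃ c : ℕ → ℕ, (∀ S T, T ∈ (V S).support → Multiset.card T = c (Multiset.card S)) ∧
    ∀ m : ℕ, η * m - 1 < |(c m : ℝ) - m| ∧ |(c m : ℝ) - m| ≤ η * m

/-- Fixed constant budget `η` for an additive adversary (`m·budget(V,m) = |V(S)| − |S|`). -/
def FixedBudgetAdd {X : Type*} (V : Adversary X) (η : ℝ) : Prop :=
  ∃ c : ℕ → ℕ, (∀ S T, T ∈ (V S).support → Multiset.card T = c (Multiset.card S)) ∧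
    ∀ m : ℕ, η * m - 1 < (c m : ℝ) - m ∧ (c m : ℝ) - m ≤ η * m

/-- Fixed constant budget `η` for a subtractive adversary (`m·budget(V,m) = |S| − |V(S)|`). -/
def FixedBudgetSub {X : Type*} (V : Adversary X) (η : ℝ) : Prop :=
  ∃ c : ℕ → ℕ, (∀ S T, T ∈ (V S).support → Multiset.card T = c (Multiset.card S)) ∧
    ∀ m : ℕ, η * m - 1 < (m : ℝ) - c m ∧ (m : ℝ) - c m ≤ η * m

/-- Probability of an event under a discrete distribution. -/
noncomputable def probEvent {β : Type*} (P : PMF β) (E : Set β) : ℝ≥0∞ :=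
  P.toOuterMeasure E

/-- `A` with sample complexity `mc` learns the class `C` against adversary `V`,
up to error `bound + ε` with confidence `1 − δ` once `m ≥ mc ε δ`. -/
def RobustLearnerFor {X : Type*} (C : Set (PMF X)) (A : Multiset X → PMF X)
    (mc : ℝ → ℝ → ℕ) (V : Adversary X) (bound : ℝ) : Prop :=
  ∀ p ∈ C, ∀ ε δ : ℝ, 0 < ε → ε < 1 → 0 < δ → δ < 1 →
    ∀ m : ℕ, mc ε δ ≤ m →
      1 - ENNReal.ofReal δ ≤
        probEvent ((iid p m).bind V) {T | tv (A T) p ≤ bound + ε}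

/-- `C` is adaptively α-robustly learnable w.r.t. the single adversary `V` with budget `η`. -/
def RobustlyLearnableWrt {X : Type*} (C : Set (PMF X)) (α : ℝ)
    (V : Adversary X) (η : ℝ) : Prop :=
  ∃ A mc, RobustLearnerFor C A mc V (α * η)

/-- `V` (with budget `η`) is a universal α-adversary for `C`. -/
def UniversalAdversary {X : Type*} (C : Set (PMF X)) (α : ℝ)
    (V : Adversary X) (η : ℝ) : Prop :=
  ¬ RobustlyLearnableWrt C α V η

/-- `C` is adaptively α-robustly learnable w.r.t. a class `𝒱` of adversaries
(each given with its budget). -/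
def RobustlyLearnableWrtClass {X : Type*} (C : Set (PMF X)) (α : ℝ)
    (𝒱 : Set (Adversary X × ℝ)) : Prop :=
  ∃ A mc, ∀ Vη ∈ 𝒱, RobustLearnerFor C A mc Vη.1 (α * Vη.2)

/-- `C` is adaptively additively α-robustly learnable: one learner works simultaneously
against all additive adaptive adversaries with fixed constant budgets. -/
def AdditivelyRobustlyLearnable {X : Type*} (C : Set (PMF X)) (α : ℝ) : Prop :=
  ∃ A mc, ∀ V : Adversary X, ∀ η : ℝ, 0 < η → η < 1 →
    IsAdditive V → FixedBudgetAdd V η → RobustLearnerFor C A mc V (α * η)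

/-- `C` is adaptively subtractively α-robustly learnable. -/
def SubtractivelyRobustlyLearnable {X : Type*} (C : Set (PMF X)) (α : ℝ) : Prop :=
  ∃ A mc, ∀ V : Adversary X, ∀ η : ℝ, 0 < η → η < 1 →
    IsSubtractive V → FixedBudgetSub V η → RobustLearnerFor C A mc V (α * η)

/-- The pair `(V1, V2)` successfully `(γ,ζ)`-confuses `C`-generated samples of size `m`. -/
def ConfusesPair {X : Type*} (C : Set (PMF X)) (V1 V2 : Adversary X)
    (γ ζ : ℝ) (m : ℕ) : Prop :=
  ∃ p ∈ C, ∃ Q : PMF (PMF X), Q.support ⊆ C ∧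
    (∀ q ∈ Q.support, γ < tv p q) ∧
    tv (advPush V1 (metaSample Q m)) (advPush V2 (iid p m)) < ζ

/-- A single adversary `V` successfully `(γ,ζ)`-confuses `C`-generated samples of size `m`. -/
def Confuses {X : Type*} (C : Set (PMF X)) (V : Adversary X) (γ ζ : ℝ) (m : ℕ) : Prop :=
  ConfusesPair C V V γ ζ m

/-- `p` is the distribution `p_{i,j,k} = (1 − 1/j)·δ_{(0,0)} + (1/j − 1/k)·U_{B_i×{2j+1}}
 + (1/k)·δ_{(i,2j+2)}` on `ℕ × ℕ`. -/
def IsPijk (B : ℕ → Finset ℕ) (i j k : ℕ) (p : PMF (ℕ × ℕ)) : Prop :=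
  ∀ x : ℕ × ℕ,
    p x = (1 - ((j : ℝ≥0∞))⁻¹) * (if x = (0, 0) then 1 else 0)
      + (((j : ℝ≥0∞))⁻¹ - ((k : ℝ≥0∞))⁻¹) *
          (if x.1 ∈ B i ∧ x.2 = 2 * j + 1 then (((B i).card : ℝ≥0∞))⁻¹ else 0)
      + ((k : ℝ≥0∞))⁻¹ * (if x = (i, 2 * j + 2) then 1 else 0)

/-- The class `C_g = {p_{i,j,g(j)} : i, j ∈ ℕ}` (for the meaningful parameters). -/
def Cg (B : ℕ → Finset ℕ) (g : ℕ → ℕ) : Set (PMF (ℕ × ℕ)) :=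
  {p | ∃ i j : ℕ, 1 ≤ j ∧ j < g j ∧ (B i).Nonempty ∧ IsPijk B i j (g j) p}

/-- `g` is superlinear: `g(n)/n → ∞`. -/
def Superlinear (g : ℕ → ℕ) : Prop :=
  Filter.Tendsto (fun n => (g n : ℝ) / n) Filter.atTop Filter.atTop

/-- `C` is f-robustly learnable w.r.t. the single adversary `V` with budget `η`. -/
def FRobustlyLearnableWrt {X : Type*} (C : Set (PMF X)) (f : ℝ → ℝ)
    (V : Adversary X) (η : ℝ) : Prop :=
  ∃ A mc, RobustLearnerFor C A mc V (f η)

/-- `C` is f-robustly learnable w.r.t. a class `𝒱` of adversaries (each with its budget). -/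
def FRobustlyLearnableWrtClass {X : Type*} (C : Set (PMF X)) (f : ℝ → ℝ)
    (𝒱 : Set (Adversary X × ℝ)) : Prop :=
  ∃ A mc, ∀ Vη ∈ 𝒱, RobustLearnerFor C A mc Vη.1 (f Vη.2)

/-- `C` is adaptively additively f-robustly learnable. -/
def AdditivelyFRobustlyLearnable {X : Type*} (C : Set (PMF X)) (f : ℝ → ℝ) : Prop :=
  ∃ A mc, ∀ V : Adversary X, ∀ η : ℝ, 0 < η → η < 1 →
    IsAdditive V → FixedBudgetAdd V η → RobustLearnerFor C A mc V (f η)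

/-- `C` is adaptively subtractively f-robustly learnable. -/
def SubtractivelyFRobustlyLearnable {X : Type*} (C : Set (PMF X)) (f : ℝ → ℝ) : Prop :=
  ∃ A mc, ∀ V : Adversary X, ∀ η : ℝ, 0 < η → η < 1 →
    IsSubtractive V → FixedBudgetSub V η → RobustLearnerFor C A mc V (f η)

/-!
A marker `(i, 2 * j + 2)` in a realizable sample identifies the distribution `p_{i,j,g(j)}`, which
emits it with probability `1 / g(j)`, and `δ_(0,0)` is `1 / j`-close to that distribution. Hence a
learner only has to wait for markers with `j < 1 / ε`, and `log(1/δ) * g(1/ε)` points suffice.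

An adversary with budget `η` defeats every learner already at `j = 1` once `g(1)` exceeds `1 / η`
by a constant factor, because by Markov's inequality all markers then fit into its budget. It can
delete them. It can also add as many markers again, which point to a decoy `B_i'`. Here each `B_i`
contains exactly one element of each pair `{2 * x, 2 * x + 1}`, and `B_i'` is `B_i` with the choice
reversed in all pairs that do not occur in the sample. Coupled samples for `i` and for `i'` become
identical, while the two distributions are almost disjoint as soon as there are many more pairs
than sample points. Reversing the unseen choices is an involution, so for each latent sample at
most half of all choices allow success, and some choice defeats a given learner with probability
about one half.
-/

section Expectation

variable {α β : Type*}

/-- The expectation of a `[0, ∞]`-valued function under a discrete distribution. -/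
noncomputable def expect (p : PMF α) (F : α → ℝ≥0∞) : ℝ≥0∞ :=
  ∑' a, p a * F a

lemma expect_const (p : PMF α) (c : ℝ≥0∞) : expect p (fun _ => c) = c := by
  rw [expect, ENNReal.tsum_mul_right, p.tsum_coe, one_mul]

lemma expect_add (p : PMF α) (F G : α → ℝ≥0∞) :
    expect p (fun a => F a + G a) = expect p F + expect p G := by
  simp only [expect, mul_add, ENNReal.tsum_add]

lemma expect_mul_const (p : PMF α) (F : α → ℝ≥0∞) (c : ℝ≥0∞) :
    expect p (fun a => F a * c) = expect p F * c := by
  simp only [expect, ← mul_assoc, ENNReal.tsum_mul_right]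

lemma expect_mono {p : PMF α} {F G : α → ℝ≥0∞} (h : ∀ a ∈ p.support, F a ≤ G a) :
    expect p F ≤ expect p G := by
  refine ENNReal.tsum_le_tsum fun a => ?_
  by_cases ha : p a = 0
  · simp only [ha, zero_mul, le_refl]
  · gcongr
    exact h a ha

lemma expect_pure (a : α) (F : α → ℝ≥0∞) : expect (PMF.pure a) F = F a := by
  rw [expect, tsum_eq_single a fun b hb => by rw [PMF.pure_apply_of_ne _ _ hb, zero_mul],
    PMF.pure_apply_self, one_mul]

lemma expect_bind (p : PMF α) (q : α → PMF β) (F : β → ℝ≥0∞) :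
    expect (p.bind q) F = expect p fun a => expect (q a) F := by
  simp only [expect, PMF.bind_apply, ← ENNReal.tsum_mul_right, ← ENNReal.tsum_mul_left]
  rw [ENNReal.tsum_comm]
  simp only [mul_assoc]

lemma expect_map (p : PMF α) (φ : α → β) (F : β → ℝ≥0∞) :
    expect (p.map φ) F = expect p fun a => F (φ a) := by
  simp only [PMF.map, expect_bind, Function.comp_apply, expect_pure]

lemma probEvent_eq_expect_indicator (p : PMF α) (E : Set α) :
    probEvent p E = expect p (E.indicator 1) := by
  refine (p.toOuterMeasure_apply E).trans (tsum_congr fun a => ?_)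
  by_cases ha : a ∈ E <;> simp [ha]

lemma probEvent_singleton (p : PMF α) (a : α) : probEvent p {a} = p a :=
  p.toOuterMeasure_apply_singleton a

lemma probEvent_map (p : PMF α) (φ : α → β) (E : Set β) :
    probEvent (p.map φ) E = probEvent p (φ ⁻¹' E) :=
  p.toOuterMeasure_map_apply φ E

lemma probEvent_eq_one {p : PMF α} {E : Set α} (h : p.support ⊆ E) : probEvent p E = 1 :=
  (p.toOuterMeasure_apply_eq_one_iff E).2 h

lemma probEvent_le_diff_add (p : PMF α) (E F : Set α) :
    probEvent p E ≤ probEvent p (E \ F) + probEvent p F :=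
  (MeasureTheory.measure_mono (Set.subset_sdiff_union E F)).trans
    (MeasureTheory.measure_union_le (μ := p.toOuterMeasure) _ _)

lemma one_sub_probEvent_le {p : PMF α} {E F : Set α} (h : p.support \ F ⊆ E) :
    1 - probEvent p F ≤ probEvent p E := by
  rw [tsub_le_iff_right, ← probEvent_eq_one Set.Subset.rfl]
  exact (probEvent_le_diff_add p _ F).trans
    (add_le_add_left (MeasureTheory.measure_mono h) _)

lemma probEvent_compl (p : PMF α) (E : Set α) : probEvent p Eᶜ = 1 - probEvent p E := by
  refine ENNReal.eq_sub_of_add_eq' ENNReal.one_ne_top ?_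
  have h_one : (fun a => Eᶜ.indicator 1 a + E.indicator 1 a) = fun _ => (1 : ℝ≥0∞) :=
    Set.indicator_compl_add_self E (1 : α → ℝ≥0∞)
  simp only [probEvent_eq_expect_indicator, ← expect_add, h_one, expect_const]

lemma probEvent_mul_le_expect (p : PMF α) (F : α → ℝ≥0∞) (t : ℝ≥0∞) :
    probEvent p {a | t ≤ F a} * t ≤ expect p F := by
  rw [probEvent_eq_expect_indicator, ← expect_mul_const]
  refine expect_mono fun a _ => ?_
  by_cases ha : t ≤ F a <;> simp [ha]

lemma sum_probEvent {ι : Type*} (s : Finset ι) (p : PMF α) (E : ι → Set α)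
    [∀ a, DecidablePred fun i => a ∈ E i] :
    ∑ i ∈ s, probEvent p (E i) = expect p fun a => (s.filter fun i => a ∈ E i).card := by
  simp only [probEvent_eq_expect_indicator, expect]
  rw [← Summable.tsum_finsetSum fun _ _ => ENNReal.summable]
  refine tsum_congr fun a => ?_
  simp only [Set.indicator_apply, Pi.one_apply, ← Finset.mul_sum, Finset.sum_boole]

end Expectation

section Averaging

variable {Ω H : Type*}

lemma two_mul_card_filter_le_card [Fintype H] {P : H → Prop} [DecidablePred P] {σ : H → H}
    (hσ : Function.Injective σ) (h : ∀ x, P x → ¬ P (σ x)) :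
    2 * (Finset.univ.filter P).card ≤ Fintype.card H := by
  have h_le : (Finset.univ.filter P).card ≤ (Finset.univ.filter fun x => ¬ P x).card :=
    Finset.card_le_card_of_injOn σ (by simpa [Set.MapsTo] using h) hσ.injOn
  have h_add := Finset.card_filter_add_card_filter_not (s := Finset.univ) P
  rw [Finset.card_univ] at h_add
  omega

lemma exists_probEvent_le_half [Finite H] [Nonempty H] (W : PMF Ω) (E : H → Set Ω) (σ : Ω → H → H)
    (hσ : ∀ ω, Function.Injective (σ ω))
    (hE : ∀ ω ∈ W.support, ∀ h, ω ∈ E h → ω ∉ E (σ ω h)) :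
    ∃ h, probEvent W (E h) ≤ 2⁻¹ := by
  classical
  cases nonempty_fintype H
  have h_card : ∀ ω ∈ W.support,
      ((Finset.univ.filter fun h => ω ∈ E h).card : ℝ≥0∞) ≤ Fintype.card H * 2⁻¹ := by
    intro ω hω
    rw [← div_eq_mul_inv, ENNReal.le_div_iff_mul_le (by simp) (by simp), mul_comm]
    exact_mod_cast two_mul_card_filter_le_card (hσ ω) (hE ω hω)
  have h_sum : ∑ h, probEvent W (E h) ≤ ∑ _h : H, 2⁻¹ := by
    rw [sum_probEvent, Finset.sum_const, Finset.card_univ, nsmul_eq_mul]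
    exact (expect_mono h_card).trans (expect_const W _).le
  by_contra! h_gt
  exact h_sum.not_gt (ENNReal.sum_lt_sum_of_nonempty Finset.univ_nonempty fun h _ => h_gt h)

end Averaging

section IID

variable {X Y : Type*}

lemma expect_iid_succ (p : PMF X) (n : ℕ) (F : Multiset X → ℝ≥0∞) :
    expect (iid p (n + 1)) F = expect (iid p n) fun s => expect p fun x => F (x ::ₘ s) := by
  simp only [iid, expect_bind, expect_map]

lemma iid_map (p : PMF X) (φ : X → Y) (m : ℕ) :
    iid (p.map φ) m = (iid p m).map (Multiset.map φ) := by
  induction m with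
  | zero => simp [iid, PMF.pure_map]
  | succ n ih =>
    simp only [iid, ih, PMF.map_bind, PMF.bind_map, PMF.map_comp, Function.comp_def,
      Multiset.map_cons]

lemma card_of_mem_support_iid {p : PMF X} {m : ℕ} {S : Multiset X}
    (hS : S ∈ (iid p m).support) : S.card = m := by
  induction m generalizing S with
  | zero => simpa [iid] using hS
  | succ n ih =>
    simp only [iid, PMF.mem_support_bind_iff, PMF.mem_support_map_iff] at hS
    obtain ⟨s, hs, x, -, rfl⟩ := hS
    rw [Multiset.card_cons, ih hs]

lemma mem_support_of_mem_support_iid {p : PMF X} {m : ℕ} {S : Multiset X}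
    (hS : S ∈ (iid p m).support) {y : X} (hy : y ∈ S) : y ∈ p.support := by
  induction m generalizing S with
  | zero => simp_all [iid]
  | succ n ih =>
    simp only [iid, PMF.mem_support_bind_iff, PMF.mem_support_map_iff] at hS
    obtain ⟨s, hs, x, hx, rfl⟩ := hS
    rcases Multiset.mem_cons.1 hy with rfl | hy
    exacts [hx, ih hs hy]

lemma expect_iid_count [DecidableEq X] (p : PMF X) (a : X) (m : ℕ) :
    expect (iid p m) (fun S => S.count a) = m * p a := by
  induction m with
  | zero => simp [iid, expect_pure]
  | succ n ih =>
    have h_cons (s : Multiset X) :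
        expect p (fun x => ((x ::ₘ s).count a : ℝ≥0∞)) = s.count a + p a := by
      calc expect p (fun x => ((x ::ₘ s).count a : ℝ≥0∞))
          = expect p (fun x => s.count a + ({a} : Set X).indicator 1 x) := by
            congr 1 with x
            simp [Multiset.count_cons, Set.indicator_apply, eq_comm]
        _ = s.count a + p a := by
            rw [expect_add, expect_const, ← probEvent_eq_expect_indicator, probEvent_singleton]
    simp only [expect_iid_succ, h_cons]
    rw [expect_add, ih, expect_const, Nat.cast_succ, add_one_mul]

lemma probEvent_iid_notMem (p : PMF X) (a : X) (m : ℕ) :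
    probEvent (iid p m) {S | a ∉ S} = (1 - p a) ^ m := by
  simp only [probEvent_eq_expect_indicator]
  induction m with
  | zero => simp [iid, expect_pure]
  | succ n ih =>
    have h_cons (s : Multiset X) :
        expect p (fun x => {S : Multiset X | a ∉ S}.indicator 1 (x ::ₘ s))
          = {S : Multiset X | a ∉ S}.indicator 1 s * (1 - p a) := by
      rw [← probEvent_singleton p a, ← probEvent_compl, probEvent_eq_expect_indicator, mul_comm,
        ← expect_mul_const]
      congr 1 with x
      by_cases hx : a = x <;> by_cases ha : a ∈ s <;> simp [hx, ha, eq_comm]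
    simp only [expect_iid_succ, h_cons]
    rw [expect_mul_const, ih, pow_succ]

end IID

section TotalVariation

variable {X : Type*}

lemma hasSum_toReal (p : PMF X) : HasSum (fun x => (p x).toReal) 1 := by
  have h := ENNReal.hasSum_toReal p.tsum_coe_ne_top
  rwa [← ENNReal.tsum_toReal_eq p.apply_ne_top, p.tsum_coe, ENNReal.toReal_one] at h

lemma summable_abs_toReal_sub (p q : PMF X) :
    Summable fun x => |(p x).toReal - (q x).toReal| :=
  ((hasSum_toReal p).sub (hasSum_toReal q)).summable.abs

lemma tv_self (p : PMF X) : tv p p = 0 := by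
  simp only [tv, sub_self, abs_zero, tsum_zero, zero_div]

lemma tv_le_tv_add_tv (r p q : PMF X) : tv p q ≤ tv r p + tv r q := by
  unfold tv
  rw [← add_div, ← (summable_abs_toReal_sub r p).tsum_add (summable_abs_toReal_sub r q)]
  refine div_le_div_of_nonneg_right ?_ zero_le_two
  refine (summable_abs_toReal_sub p q).tsum_le_tsum (fun x => ?_)
    ((summable_abs_toReal_sub r p).add (summable_abs_toReal_sub r q))
  rw [abs_sub_comm (r x).toReal (p x).toReal]
  exact abs_sub_le _ _ _

lemma hasSum_indicator_toReal (p : PMF X) (E : Set X) :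
    HasSum (E.indicator fun x => (p x).toReal) (probEvent p E).toReal := by
  have h_ne_top (x : X) : E.indicator p x ≠ ∞ :=
    ne_top_of_le_ne_top (p.apply_ne_top x) (Set.indicator_le_self _ _ x)
  have h_toReal (x : X) : (E.indicator p x).toReal = E.indicator (fun x => (p x).toReal) x := by
    by_cases hx : x ∈ E <;> simp [hx]
  rw [probEvent, PMF.toOuterMeasure_apply, ENNReal.tsum_toReal_eq h_ne_top]
  simp only [h_toReal]
  exact ((hasSum_toReal p).summable.indicator E).hasSum

lemma probEvent_sub_probEvent_le_tv (p q : PMF X) (E : Set X) :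
    (probEvent p E).toReal - (probEvent q E).toReal ≤ tv p q := by
  have h_diff := (hasSum_toReal p).sub (hasSum_toReal q)
  have h_indicator := (hasSum_indicator_toReal p E).sub (hasSum_indicator_toReal q E)
  have h_le := hasSum_le (fun x => ?_) ((h_indicator.mul_left 2).sub h_diff)
    (summable_abs_toReal_sub p q).hasSum
  · unfold tv
    linarith
  · by_cases hx : x ∈ E <;> simp only [hx, Set.indicator_of_mem, Set.indicator_of_notMem,
      not_false_eq_true]
    · linarith [le_abs_self ((p x).toReal - (q x).toReal)]
    · linarith [neg_le_abs ((p x).toReal - (q x).toReal)]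

lemma tv_pure (a : X) (p : PMF X) : tv (PMF.pure a) p = 1 - (p a).toReal := by
  classical
  have h_le : (p a).toReal ≤ 1 := ENNReal.toReal_mono ENNReal.one_ne_top (p.coe_le_one a)
  have h_abs : ∀ x, |(PMF.pure a x).toReal - (p x).toReal|
      = (p x).toReal + if x = a then 1 - 2 * (p a).toReal else 0 := by
    intro x
    rcases eq_or_ne x a with rfl | hx
    · rw [PMF.pure_apply_self, ENNReal.toReal_one, abs_of_nonneg (sub_nonneg.2 h_le), if_pos rfl]
      ring
    · simp [PMF.pure_apply_of_ne _ _ hx, hx]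
  have h_sum := (hasSum_toReal p).add (hasSum_ite_eq a (1 - 2 * (p a).toReal))
  rw [tv, tsum_congr h_abs, h_sum.tsum_eq]
  ring

end TotalVariation

section RealizableLearning

variable {B : ℕ → Finset ℕ} {g : ℕ → ℕ} {i j k : ℕ} {p q : PMF (ℕ × ℕ)}

lemma IsPijk.unique (hp : IsPijk B i j k p) (hq : IsPijk B i j k q) : p = q :=
  PMF.ext fun x => (hp x).trans (hq x).symm

lemma IsPijk.apply_marker (hp : IsPijk B i j k p) : p (i, 2 * j + 2) = (k : ℝ≥0∞)⁻¹ := by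
  simp [hp (i, 2 * j + 2)]

lemma IsPijk.eq_of_marker_mem_support (hp : IsPijk B i j k p) {i' j' : ℕ}
    (h : (i', 2 * j' + 2) ∈ p.support) : i' = i ∧ j' = j := by
  by_contra h_ne
  have h_parity : 2 * j' + 2 ≠ 2 * j + 1 := by omega
  have h_marker : (i', 2 * j' + 2) ≠ (i, 2 * j + 2) := by simpa using h_ne
  exact (p.mem_support_iff _).1 h (by simp [hp (i', 2 * j' + 2), h_parity, h_marker])

lemma IsPijk.one_sub_inv_le_apply_zero (hp : IsPijk B i j k p) :
    1 - (j : ℝ≥0∞)⁻¹ ≤ p (0, 0) := by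
  simp [hp (0, 0)]

lemma IsPijk.tv_pure_zero_le (hp : IsPijk B i j k p) (hj : 1 ≤ j) :
    tv (PMF.pure (0, 0)) p ≤ (j : ℝ)⁻¹ := by
  have h_inv : (j : ℝ≥0∞)⁻¹ ≤ 1 := ENNReal.inv_le_one.2 (by exact_mod_cast hj)
  have h_mass := ENNReal.toReal_mono (p.apply_ne_top _) hp.one_sub_inv_le_apply_zero
  rw [ENNReal.toReal_sub_of_le h_inv ENNReal.one_ne_top, ENNReal.toReal_one, ENNReal.toReal_inv,
    ENNReal.toReal_natCast] at h_mass
  rw [tv_pure]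
  linarith

open Classical in
/-- The realizable learner: a point `(i, 2 * j + 2)` of the sample gives away the pair `(i, j)`
and hence the distribution; without such a point the learner answers `δ_(0,0)`. -/
noncomputable def markerLearner (B : ℕ → Finset ℕ) (g : ℕ → ℕ) (S : Multiset (ℕ × ℕ)) :
    PMF (ℕ × ℕ) :=
  if h : ∃ p i j, (i, 2 * j + 2) ∈ S ∧ IsPijk B i j (g j) p then h.choose else PMF.pure (0, 0)

lemma markerLearner_eq_of_mem (hp : IsPijk B i j (g j) p) {S : Multiset (ℕ × ℕ)}
    (hS : ∀ y ∈ S, y ∈ p.support) (h : (i, 2 * j + 2) ∈ S) : markerLearner B g S = p := by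
  have h_ex : ∃ p i j, (i, 2 * j + 2) ∈ S ∧ IsPijk B i j (g j) p := ⟨p, i, j, h, hp⟩
  obtain ⟨i', j', h_mem, hp'⟩ := h_ex.choose_spec
  obtain ⟨rfl, rfl⟩ := hp.eq_of_marker_mem_support (hS _ h_mem)
  rw [markerLearner, dif_pos h_ex]
  exact hp'.unique hp

lemma markerLearner_eq_pure_of_notMem (hp : IsPijk B i j k p) {S : Multiset (ℕ × ℕ)}
    (hS : ∀ y ∈ S, y ∈ p.support) (h : (i, 2 * j + 2) ∉ S) :
    markerLearner B g S = PMF.pure (0, 0) := by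
  refine dif_neg ?_
  rintro ⟨-, i', j', h_mem, -⟩
  obtain ⟨rfl, rfl⟩ := hp.eq_of_marker_mem_support (hS _ h_mem)
  exact h h_mem

lemma one_sub_inv_pow_le {δ : ℝ} (hδ : 0 < δ) (hk : 1 ≤ k) {m : ℕ}
    (hm : Real.log (1 / δ) * k ≤ m) : (1 - (k : ℝ)⁻¹) ^ m ≤ δ := by
  have hk0 : (0 : ℝ) < k := by exact_mod_cast hk
  have h_inv : (k : ℝ)⁻¹ ≤ 1 := inv_le_one_of_one_le₀ (by exact_mod_cast hk)
  have h_log : Real.log (1 / δ) ≤ m * (k : ℝ)⁻¹ := by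
    rwa [← div_eq_mul_inv, le_div_iff₀ hk0]
  rw [one_div, Real.log_inv] at h_log
  calc (1 - (k : ℝ)⁻¹) ^ m ≤ Real.exp (-(k : ℝ)⁻¹) ^ m :=
        pow_le_pow_left₀ (sub_nonneg.2 h_inv) (Real.one_sub_le_exp_neg _) m
    _ = Real.exp (m * -(k : ℝ)⁻¹) := (Real.exp_nat_mul _ _).symm
    _ ≤ Real.exp (Real.log δ) := Real.exp_le_exp.2 (by linarith)
    _ = δ := Real.exp_log hδ

lemma probEvent_iid_marker_notMem_le (hp : IsPijk B i j k p) (hk : 1 ≤ k) {δ : ℝ} (hδ : 0 < δ)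
    {m : ℕ} (hm : Real.log (1 / δ) * k ≤ m) :
    probEvent (iid p m) {S | (i, 2 * j + 2) ∉ S} ≤ ENNReal.ofReal δ := by
  have h_inv : (k : ℝ≥0∞)⁻¹ ≤ 1 := ENNReal.inv_le_one.2 (by exact_mod_cast hk)
  rw [probEvent_iid_notMem, hp.apply_marker]
  refine (ENNReal.le_ofReal_iff_toReal_le (by finiteness) hδ.le).2 ?_
  rw [ENNReal.toReal_pow, ENNReal.toReal_sub_of_le h_inv ENNReal.one_ne_top, ENNReal.toReal_one,
    ENNReal.toReal_inv, ENNReal.toReal_natCast]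
  exact one_sub_inv_pow_le hδ hk hm

theorem markerLearner_learns (hg : Monotone g) (hp : p ∈ Cg B g) {ε δ : ℝ} (hε : 0 < ε)
    (hδ : 0 < δ) (hδ1 : δ < 1) {m : ℕ} (hm : Real.log (1 / δ) * (g ⌈1 / ε⌉₊ : ℝ) ≤ m) :
    1 - ENNReal.ofReal δ ≤ probEvent (iid p m) {S | tv (markerLearner B g S) p ≤ ε} := by
  obtain ⟨i, j, hj, hjg, -, hp⟩ := hp
  have h_seen : ∀ S ∈ (iid p m).support, (i, 2 * j + 2) ∈ S →
      tv (markerLearner B g S) p ≤ ε := by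
    intro S hS h
    rw [markerLearner_eq_of_mem hp (fun _ => mem_support_of_mem_support_iid hS) h, tv_self]
    exact hε.le
  have h_unseen : ∀ S ∈ (iid p m).support, (i, 2 * j + 2) ∉ S →
      tv (markerLearner B g S) p ≤ (j : ℝ)⁻¹ := by
    intro S hS h
    rw [markerLearner_eq_pure_of_notMem hp (fun _ => mem_support_of_mem_support_iid hS) h]
    exact hp.tv_pure_zero_le hj
  rcases le_or_gt (j : ℝ)⁻¹ ε with h_light | h_heavy
  · rw [probEvent_eq_one fun S hS => ?_]
    · exact tsub_le_self
    · by_cases h : (i, 2 * j + 2) ∈ S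
      exacts [h_seen S hS h, (h_unseen S hS h).trans h_light]
  · have h_le : j ≤ ⌈1 / ε⌉₊ := by
      have h_lt : (j : ℝ) < 1 / ε := by
        rwa [one_div, lt_inv_comm₀ (by exact_mod_cast hj) hε]
      exact_mod_cast (h_lt.le.trans (Nat.le_ceil _))
    have hmg : Real.log (1 / δ) * g j ≤ m := by
      refine (mul_le_mul_of_nonneg_left (by exact_mod_cast hg h_le) ?_).trans hm
      exact Real.log_nonneg (one_le_one_div hδ hδ1.le)
    calc 1 - ENNReal.ofReal δ ≤ 1 - probEvent (iid p m) {S | (i, 2 * j + 2) ∉ S} :=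
          tsub_le_tsub_left (probEvent_iid_marker_notMem_le hp (hj.trans hjg.le) hδ hmg) 1
      _ ≤ probEvent (iid p m) {S | tv (markerLearner B g S) p ≤ ε} :=
          one_sub_probEvent_le fun S ⟨hS, h⟩ => h_seen S hS (not_not.1 h)

end RealizableLearning

section HardDistributions

variable {n : ℕ} {idx : Finset ℕ → ℕ}

/-- The code of `h : Fin n → Bool` as a finite set: it contains exactly one element of each pair
`{2 * x, 2 * x + 1}` with `x < n`, selected by the bit `h x`. -/
def codeSet (h : Fin n → Bool) : Finset ℕ :=
  Finset.univ.image fun x => Nat.bit (h x) x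

/-- The point of the sample space of `p_{i,1,k}`, `i = idx (codeSet h)`, that stands for the
latent outcome `a`: the marker `(i, 4)` for `none`, the code element with label `3` otherwise. -/
def samplePoint (idx : Finset ℕ → ℕ) (h : Fin n → Bool) (a : Option (Fin n)) : ℕ × ℕ :=
  a.elim (idx (codeSet h), 4) fun x => (Nat.bit (h x) x, 3)

/-- The distribution that returns `none` with probability `1 / k` and is uniform on `Fin n`
otherwise. All hard distributions are its images, so that their samples can be coupled. -/
noncomputable def latent (n k : ℕ) [NeZero n] [NeZero k] : PMF (Option (Fin n)) :=
  PMF.ofFintype (fun a => a.elim (k : ℝ≥0∞)⁻¹ fun _ => (1 - (k : ℝ≥0∞)⁻¹) * (n : ℝ≥0∞)⁻¹) <| by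
    have h_inv : (k : ℝ≥0∞)⁻¹ ≤ 1 := ENNReal.inv_le_one.2 (by exact_mod_cast NeZero.one_le)
    have hn : (n : ℝ≥0∞) ≠ 0 := NeZero.ne _
    simp only [Fintype.sum_option, Option.elim_none, Option.elim_some, Finset.sum_const,
      Finset.card_univ, Fintype.card_fin, nsmul_eq_mul]
    rw [mul_left_comm, ENNReal.mul_inv_cancel hn (ENNReal.natCast_ne_top n), mul_one,
      add_tsub_cancel_of_le h_inv]

/-- The distribution `p_{i,1,k}` with `i = idx (codeSet h)`. -/
noncomputable def hardDist (idx : Finset ℕ → ℕ) (k : ℕ) [NeZero n] [NeZero k]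
    (h : Fin n → Bool) : PMF (ℕ × ℕ) :=
  (latent n k).map (samplePoint idx h)

/-- Negates the bits of `h` at the positions that do not occur in the latent sample `ω`. -/
def flipUnseen (ω : Multiset (Option (Fin n))) (h : Fin n → Bool) (x : Fin n) : Bool :=
  if some x ∈ ω then h x else !h x

lemma bit_inj {b c : Bool} {x y : ℕ} : Nat.bit b x = Nat.bit c y ↔ b = c ∧ x = y := by
  refine ⟨fun h => ⟨?_, ?_⟩, fun ⟨hb, hx⟩ => hb ▸ hx ▸ rfl⟩
  · simpa using congrArg Nat.bodd h
  · simpa using congrArg Nat.div2 h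

lemma mem_codeSet {h : Fin n → Bool} {a : ℕ} : a ∈ codeSet h ↔ ∃ x, Nat.bit (h x) x = a := by
  simp [codeSet]

lemma card_codeSet (h : Fin n → Bool) : (codeSet h).card = n := by
  rw [codeSet, Finset.card_image_of_injective _ fun x y e => Fin.ext (bit_inj.1 e).2,
    Finset.card_univ, Fintype.card_fin]

lemma samplePoint_injective (idx : Finset ℕ → ℕ) (h : Fin n → Bool) :
    Function.Injective (samplePoint idx h) := by
  rintro (_ | x) (_ | y) e <;> simp_all [samplePoint, bit_inj, Fin.ext_iff]

lemma flipUnseen_involutive (ω : Multiset (Option (Fin n))) :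
    Function.Involutive (flipUnseen ω) := by
  intro h
  funext x
  by_cases hx : some x ∈ ω <;> simp [flipUnseen, hx]

lemma map_apply_of_injective {α β : Type*} (p : PMF α) {φ : α → β} (hφ : Function.Injective φ)
    (a : α) : p.map φ (φ a) = p a := by
  rw [← probEvent_singleton, ← probEvent_singleton, probEvent_map, ← Set.image_singleton,
    Set.preimage_image_eq _ hφ]

variable {k : ℕ} [NeZero n] [NeZero k]

lemma isPijk_hardDist {B : ℕ → Finset ℕ} (h : Fin n → Bool)
    (hidx : B (idx (codeSet h)) = codeSet h) :
    IsPijk B (idx (codeSet h)) 1 k (hardDist idx k h) := by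
  intro y
  rw [hidx, card_codeSet, hardDist]
  by_cases hy : y ∈ Set.range (samplePoint idx h)
  · obtain ⟨_ | x, rfl⟩ := hy
    · rw [map_apply_of_injective _ (samplePoint_injective idx h)]
      simp [latent, samplePoint]
    · have hx : Nat.bit (h x) x ∈ codeSet h := mem_codeSet.2 ⟨x, rfl⟩
      rw [map_apply_of_injective _ (samplePoint_injective idx h)]
      simp [latent, samplePoint, hx]
  · have h_code : ¬ (y.1 ∈ codeSet h ∧ y.2 = 2 * 1 + 1) := by
      rintro ⟨h_mem, h_label⟩
      obtain ⟨x, hx⟩ := mem_codeSet.1 h_mem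
      exact hy ⟨some x, Prod.ext hx h_label.symm⟩
    have h_marker : y ≠ (idx (codeSet h), 2 * 1 + 2) := fun e => hy ⟨none, e.symm⟩
    have h_zero : (latent n k).map (samplePoint idx h) y = 0 := by
      rw [PMF.apply_eq_zero_iff, PMF.support_map]
      exact fun h_mem => hy (Set.image_subset_range _ _ h_mem)
    rw [h_zero, if_neg h_code, if_neg h_marker]
    simp

lemma hardDist_mem_Cg {B : ℕ → Finset ℕ} {g : ℕ → ℕ} [NeZero (g 1)] (hg : 1 < g 1)
    (hidx : Function.RightInverse idx B) (h : Fin n → Bool) : hardDist idx (g 1) h ∈ Cg B g := by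
  refine ⟨idx (codeSet h), 1, le_rfl, hg, ?_, isPijk_hardDist h (hidx _)⟩
  rw [hidx, ← Finset.card_pos, card_codeSet]
  exact NeZero.pos n

lemma card_le_card_filter_notMem_add {α : Type*} [Fintype α] [DecidableEq α]
    (ω : Multiset (Option α)) :
    Fintype.card α ≤ (Finset.univ.filter fun x => some x ∉ ω).card + ω.card := by
  have h_seen : (Finset.univ.filter fun x => some x ∈ ω).card ≤ ω.card :=
    calc (Finset.univ.filter fun x => some x ∈ ω).card ≤ ω.toFinset.card :=
          Finset.card_le_card_of_injOn some (by simp [Set.MapsTo])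
            (Option.some_injective α).injOn
      _ ≤ ω.card := Multiset.toFinset_card_le ω
  have h_add := Finset.card_filter_add_card_filter_not (s := Finset.univ) fun x : α => some x ∈ ω
  rw [Finset.card_univ] at h_add
  omega

lemma probEvent_latent_image_some (s : Finset (Fin n)) :
    (probEvent (latent n k) (some '' s)).toReal = (1 - (k : ℝ)⁻¹) * (s.card / n) := by
  have h_inv : (k : ℝ≥0∞)⁻¹ ≤ 1 := ENNReal.inv_le_one.2 (by exact_mod_cast NeZero.one_le)
  rw [probEvent, ← Finset.coe_image, PMF.toOuterMeasure_apply_finset,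
    Finset.sum_image (Option.some_injective _).injOn]
  simp only [latent, PMF.ofFintype_apply, Option.elim_some, Finset.sum_const, nsmul_eq_mul,
    ENNReal.toReal_mul, ENNReal.toReal_sub_of_le h_inv ENNReal.one_ne_top, ENNReal.toReal_one,
    ENNReal.toReal_inv, ENNReal.toReal_natCast]
  ring

theorem le_tv_hardDist_flipUnseen (h : Fin n → Bool) (ω : Multiset (Option (Fin n))) :
    (1 - (k : ℝ)⁻¹) * (1 - ω.card / n)
      ≤ tv (hardDist idx k h) (hardDist idx k (flipUnseen ω h)) := by
  set unseen : Finset (Fin n) := Finset.univ.filter fun x => some x ∉ ω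
  set E : Set (ℕ × ℕ) := samplePoint idx h '' (some '' (unseen : Set (Fin n)))
  have h_event : (probEvent (hardDist idx k h) E).toReal = (1 - (k : ℝ)⁻¹) * (unseen.card / n) := by
    rw [hardDist, probEvent_map, Set.preimage_image_eq _ (samplePoint_injective idx h),
      probEvent_latent_image_some]
  have h_flip : probEvent (hardDist idx k (flipUnseen ω h)) E = 0 := by
    have h_empty : samplePoint idx (flipUnseen ω h) ⁻¹' E = ∅ := by
      refine Set.eq_empty_of_forall_notMem ?_
      rintro a ⟨-, ⟨x, hx, rfl⟩, e⟩
      have hx : some x ∉ ω := (Finset.mem_filter.1 hx).2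
      rcases a with _ | y
      · simp [samplePoint] at e
      · obtain ⟨h_bit, h_pos⟩ := bit_inj.1 (Prod.ext_iff.1 e).1
        obtain rfl := Fin.ext h_pos
        simp [flipUnseen, hx] at h_bit
    rw [hardDist, probEvent_map, h_empty]
    exact MeasureTheory.measure_empty
  have h_card : (n : ℝ) ≤ unseen.card + ω.card := by
    exact_mod_cast (Fintype.card_fin n).ge.trans (card_le_card_filter_notMem_add ω)
  have h_ratio : 1 - (ω.card : ℝ) / n ≤ unseen.card / n := by
    have hn : (0 : ℝ) < n := by exact_mod_cast NeZero.pos n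
    rw [sub_le_iff_le_add, ← add_div, one_le_div hn]
    exact h_card
  have h_inv : (k : ℝ)⁻¹ ≤ 1 := inv_le_one_of_one_le₀ (by exact_mod_cast NeZero.one_le)
  calc (1 - (k : ℝ)⁻¹) * (1 - ω.card / n) ≤ (1 - (k : ℝ)⁻¹) * (unseen.card / n) :=
        mul_le_mul_of_nonneg_left h_ratio (sub_nonneg.2 h_inv)
    _ = (probEvent (hardDist idx k h) E).toReal
          - (probEvent (hardDist idx k (flipUnseen ω h)) E).toReal := by
        rw [h_event, h_flip, ENNReal.toReal_zero, sub_zero]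
    _ ≤ tv (hardDist idx k h) (hardDist idx k (flipUnseen ω h)) :=
        probEvent_sub_probEvent_le_tv _ _ E

end HardDistributions

section LowerBound

lemma probEvent_iid_floor_lt_count_le {X : Type*} [DecidableEq X] (p : PMF X) (a : X) {η : ℝ}
    (hη : 0 < η) {m : ℕ} (hm : m ≠ 0) :
    probEvent (iid p m) {S | ⌊η * m⌋₊ < S.count a} ≤ p a / ENNReal.ofReal η := by
  have h_markov : probEvent (iid p m) {S | ⌊η * m⌋₊ < S.count a} * ENNReal.ofReal (η * m)
      ≤ m * p a := by
    rw [← expect_iid_count]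
    refine le_trans ?_ (probEvent_mul_le_expect _ _ (ENNReal.ofReal (η * m)))
    gcongr
    refine MeasureTheory.measure_mono fun S hS => ?_
    exact ENNReal.ofReal_le_natCast.2 ((Nat.floor_lt (by positivity)).1 hS).le
  rw [ENNReal.ofReal_mul hη.le, ENNReal.ofReal_natCast, ← mul_assoc, mul_comm] at h_markov
  rw [ENNReal.le_div_iff_mul_le (by simp [hη]) (by simp)]
  exact (ENNReal.mul_le_mul_iff_right (by exact_mod_cast hm) (ENNReal.natCast_ne_top m)).1 h_markov

/-- The transformation `v` of samples, with budget `η`, hides the code: as long as the number of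
markers is within budget, it maps a sample for `h` and the coupled sample for `h` with the unseen
bits flipped to the same result. -/
def HidesCode (idx : Finset ℕ → ℕ) (η : ℝ) (v : Multiset (ℕ × ℕ) → Multiset (ℕ × ℕ)) : Prop :=
  ∀ ⦃n : ℕ⦄ (h : Fin n → Bool) (ω : Multiset (Option (Fin n))), ω.count none ≤ ⌊η * ω.card⌋₊ →
    v (ω.map (samplePoint idx (flipUnseen ω h))) = v (ω.map (samplePoint idx h))

variable {idx : Finset ℕ → ℕ} {η : ℝ} {v : Multiset (ℕ × ℕ) → Multiset (ℕ × ℕ)}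

lemma exists_probEvent_tv_hardDist_le {n k m : ℕ} [NeZero n] [NeZero k] (hv : HidesCode idx η v)
    (A : Multiset (ℕ × ℕ) → PMF (ℕ × ℕ)) {r : ℝ}
    (hr : 2 * r < (1 - (k : ℝ)⁻¹) * (1 - (m : ℝ) / n)) :
    ∃ h : Fin n → Bool, probEvent ((iid (hardDist idx k h) m).bind fun S => PMF.pure (v S))
        {T | tv (A T) (hardDist idx k h) ≤ r}
      ≤ 2⁻¹ + probEvent (iid (latent n k) m) {ω | ⌊η * m⌋₊ < ω.count none} := by
  set bad : Set (Multiset (Option (Fin n))) := {ω | ⌊η * m⌋₊ < ω.count none}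
  set success : (Fin n → Bool) → Set (Multiset (Option (Fin n))) := fun h =>
    {ω | tv (A (v (ω.map (samplePoint idx h)))) (hardDist idx k h) ≤ r}
  have h_disjoint : ∀ ω ∈ (iid (latent n k) m).support, ∀ h,
      ω ∈ success h \ bad → ω ∉ success (flipUnseen ω h) \ bad := by
    rintro ω hω h ⟨h_succ, h_good⟩ ⟨h_succ', -⟩
    obtain rfl := card_of_mem_support_iid hω
    simp only [success, Set.mem_ofPred_eq, hv h ω (not_lt.1 h_good)] at h_succ h_succ'
    have h_far := le_tv_hardDist_flipUnseen (idx := idx) (k := k) h ω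
    have h_tri := tv_le_tv_add_tv (A (v (ω.map (samplePoint idx h)))) (hardDist idx k h)
      (hardDist idx k (flipUnseen ω h))
    linarith
  obtain ⟨h, hh⟩ := exists_probEvent_le_half (iid (latent n k) m) (fun h => success h \ bad)
    flipUnseen (fun ω => (flipUnseen_involutive ω).injective) h_disjoint
  refine ⟨h, ?_⟩
  change probEvent (PMF.map v (iid (hardDist idx k h) m)) _ ≤ _
  rw [hardDist, iid_map, PMF.map_comp, probEvent_map]
  exact (probEvent_le_diff_add _ _ bad).trans (add_le_add_left hh _)

lemma probEvent_iid_latent_count_lt {n k m : ℕ} [NeZero n] [NeZero k] (hη : 0 < η) (hm : m ≠ 0)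
    {δ : ℝ} (hδ : 0 < δ) (hk : δ⁻¹ < η * k) :
    probEvent (iid (latent n k) m) {ω | ⌊η * m⌋₊ < ω.count none} < ENNReal.ofReal δ :=
  calc probEvent (iid (latent n k) m) {ω | ⌊η * m⌋₊ < ω.count none}
      ≤ (k : ℝ≥0∞)⁻¹ / ENNReal.ofReal η := probEvent_iid_floor_lt_count_le _ none hη hm
    _ = ENNReal.ofReal (η * k)⁻¹ := by
      have hk0 : (0 : ℝ) < k := by exact_mod_cast NeZero.pos k
      rw [ENNReal.ofReal_inv_of_pos (by positivity), ENNReal.ofReal_mul hη.le,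
        ENNReal.ofReal_natCast, div_eq_mul_inv, mul_comm, ENNReal.mul_inv (by simp) (by simp)]
    _ < ENNReal.ofReal δ := (ENNReal.ofReal_lt_ofReal_iff hδ).2 (inv_lt_of_inv_lt₀ hδ hk)

lemma two_mul_add_lt_one_sub_inv_sq {b ε k : ℝ} (hk : 0 < k) (hbk : 4 < (1 - 2 * b) * k)
    (hε : ε ≤ (1 - 2 * b) / 4) : 2 * (b + ε) < (1 - k⁻¹) * (1 - k⁻¹) := by
  have h_inv : k⁻¹ < (1 - 2 * b) / 4 := by
    rw [inv_lt_iff_one_lt_mul₀ hk]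
    linarith
  linarith [sq_nonneg k⁻¹]

theorem not_robustLearnerFor_of_hidesCode {B : ℕ → Finset ℕ} {g : ℕ → ℕ} {b : ℝ}
    (hidx : Function.RightInverse idx B) (hη : 0 < η) (hg : 1 < g 1) (hηg : 4 < η * g 1)
    (hbg : 4 < (1 - 2 * b) * g 1) (hv : HidesCode idx η v) (A : Multiset (ℕ × ℕ) → PMF (ℕ × ℕ))
    (mc : ℝ → ℝ → ℕ) :
    ¬ RobustLearnerFor (Cg B g) A mc (fun S => PMF.pure (v S)) b := by
  intro hA
  set k := g 1
  have hk : (0 : ℝ) < k := by exact_mod_cast zero_lt_one.trans hg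
  have hb : 0 < 1 - 2 * b := pos_of_mul_pos_left (by linarith) hk.le
  set ε := min ((1 - 2 * b) / 4) (1 / 2)
  set m := max (mc ε 4⁻¹) 1
  have hm : m ≠ 0 := (zero_lt_one.trans_le (le_max_right _ _)).ne'
  have : NeZero k := ⟨(zero_lt_one.trans hg).ne'⟩
  have : NeZero m := ⟨hm⟩
  have h_radius : 2 * (b + ε) < (1 - (k : ℝ)⁻¹) * (1 - (m : ℝ) / (k * m : ℕ)) := by
    rw [Nat.cast_mul, div_mul_cancel_right₀ (by exact_mod_cast hm)]
    exact two_mul_add_lt_one_sub_inv_sq hk hbg (min_le_left _ _)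
  obtain ⟨h, h_success⟩ := exists_probEvent_tv_hardDist_le hv A h_radius
  have h_rare : probEvent (iid (latent (k * m) k) m) {ω | ⌊η * m⌋₊ < ω.count none}
      < ENNReal.ofReal 4⁻¹ :=
    probEvent_iid_latent_count_lt hη hm (by norm_num) (by rwa [inv_inv])
  have h_learn := hA (hardDist idx k h) (hardDist_mem_Cg hg hidx h) ε 4⁻¹ (by positivity)
    ((min_le_right _ _).trans_lt (by norm_num)) (by norm_num) (by norm_num) m (le_max_left _ _)
  have h_lt : 1 - ENNReal.ofReal 4⁻¹ < 2⁻¹ + ENNReal.ofReal 4⁻¹ :=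
    h_learn.trans_lt (h_success.trans_lt (ENNReal.add_lt_add_left (by simp) h_rare))
  refine h_lt.not_ge (ENNReal.le_sub_of_add_le_right ENNReal.ofReal_ne_top ?_)
  rw [← ENNReal.toReal_le_toReal (by simp) (by simp), ENNReal.toReal_add (by simp) (by simp),
    ENNReal.toReal_add (by simp) (by simp), ENNReal.toReal_ofReal (by norm_num)]
  norm_num

end LowerBound

section DeterministicAdversaries

variable {X : Type*} {v : Multiset X → Multiset X} {η : ℝ}

lemma isAdditive_pure (hv : ∀ S, S ≤ v S) : IsAdditive fun S => PMF.pure (v S) := by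
  intro S T hT
  obtain rfl := (PMF.mem_support_pure_iff _ _).1 hT
  exact hv S

lemma isSubtractive_pure (hv : ∀ S, v S ≤ S) : IsSubtractive fun S => PMF.pure (v S) := by
  intro S T hT
  obtain rfl := (PMF.mem_support_pure_iff _ _).1 hT
  exact hv S

lemma fixedBudgetAdd_pure (hη : 0 ≤ η) (hv : ∀ S, (v S).card = S.card + ⌊η * S.card⌋₊) :
    FixedBudgetAdd (fun S => PMF.pure (v S)) η := by
  refine ⟨fun m => m + ⌊η * m⌋₊, fun S T hT => ?_, fun m => ?_⟩
  · rw [(PMF.mem_support_pure_iff _ _).1 hT, hv]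
  · rw [Nat.cast_add, add_sub_cancel_left]
    exact ⟨Nat.sub_one_lt_floor _, Nat.floor_le (by positivity)⟩

lemma fixedBudgetSub_pure (hη : 0 ≤ η) (hη1 : η ≤ 1)
    (hv : ∀ S, (v S).card = S.card - ⌊η * S.card⌋₊) :
    FixedBudgetSub (fun S => PMF.pure (v S)) η := by
  refine ⟨fun m => m - ⌊η * m⌋₊, fun S T hT => ?_, fun m => ?_⟩
  · rw [(PMF.mem_support_pure_iff _ _).1 hT, hv]
  · have h_le : ⌊η * m⌋₊ ≤ m :=
      Nat.floor_le_of_le (mul_le_of_le_one_left (Nat.cast_nonneg m) hη1)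
    rw [Nat.cast_sub h_le, sub_sub_cancel]
    exact ⟨Nat.sub_one_lt_floor _, Nat.floor_le (by positivity)⟩

/-- A canonical choice of `n` elements of `S`, or all of `S` if there are fewer. -/
noncomputable def subsample (S : Multiset X) (n : ℕ) : Multiset X :=
  (S.toList.take n : Multiset X)

lemma subsample_le (S : Multiset X) (n : ℕ) : subsample S n ≤ S :=
  calc subsample S n ≤ (S.toList : Multiset X) := (List.take_sublist n S.toList).subperm
    _ = S := S.coe_toList

lemma card_subsample (S : Multiset X) (n : ℕ) : (subsample S n).card = min n S.card := by
  simp [subsample]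

lemma subsample_zero (S : Multiset X) : subsample S 0 = 0 := by
  simp [subsample]

lemma subsample_of_card_le {S : Multiset X} {n : ℕ} (h : S.card ≤ n) : subsample S n = S := by
  rw [subsample, List.take_of_length_le (by simpa using h), S.coe_toList]

end DeterministicAdversaries

section Attacks

/-- The points of the sample with label `4`, the label of the markers of all `p_{i,1,k}`. -/
def markers (S : Multiset (ℕ × ℕ)) : Multiset (ℕ × ℕ) :=
  S.filter fun y => y.2 = 4

/-- The points of the sample that do not carry the marker label. -/
def unmarked (S : Multiset (ℕ × ℕ)) : Multiset (ℕ × ℕ) :=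
  S.filter fun y => ¬ y.2 = 4

/-- The subtractive adversary: it removes `⌊η * |S|⌋` points of the sample, markers first. -/
noncomputable def subtractiveAttack (η : ℝ) (S : Multiset (ℕ × ℕ)) : Multiset (ℕ × ℕ) :=
  subsample (unmarked S) (S.card - ⌊η * S.card⌋₊)
    + subsample (markers S) (S.card - ⌊η * S.card⌋₊ - (unmarked S).card)

/-- Replaces `2 * x` by `2 * x + 1` and vice versa in `K`, unless the element occurs in the
sample `S`. On sets of the form `codeSet h` this is `flipUnseen`. -/
def flipUnseenSet (S : Multiset (ℕ × ℕ)) (K : Finset ℕ) : Finset ℕ :=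
  K.image fun a => if (a, 3) ∈ S then a else a ^^^ 1

/-- The markers of the sample with the set they point to changed at the unseen positions. -/
def decoys (B : ℕ → Finset ℕ) (idx : Finset ℕ → ℕ) (S : Multiset (ℕ × ℕ)) : Multiset (ℕ × ℕ) :=
  (markers S).map fun y => (idx (flipUnseenSet S (B y.1)), 4)

/-- The additive adversary: it adds a decoy for each marker, as far as the budget permits, and
spends the rest of the budget on the uninformative point `(0, 0)`. -/
noncomputable def additiveAttack (B : ℕ → Finset ℕ) (idx : Finset ℕ → ℕ) (η : ℝ)
    (S : Multiset (ℕ × ℕ)) : Multiset (ℕ × ℕ) :=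
  S + subsample (decoys B idx S) ⌊η * S.card⌋₊
    + Multiset.replicate (⌊η * S.card⌋₊ - (markers S).card) (0, 0)

lemma markers_add_unmarked (S : Multiset (ℕ × ℕ)) : markers S + unmarked S = S :=
  Multiset.filter_add_not _ S

lemma subtractiveAttack_le (η : ℝ) (S : Multiset (ℕ × ℕ)) : subtractiveAttack η S ≤ S :=
  calc subtractiveAttack η S ≤ unmarked S + markers S :=
        add_le_add (subsample_le _ _) (subsample_le _ _)
    _ = S := by rw [add_comm, markers_add_unmarked]

lemma card_subtractiveAttack (η : ℝ) (S : Multiset (ℕ × ℕ)) :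
    (subtractiveAttack η S).card = S.card - ⌊η * S.card⌋₊ := by
  have h_card := congrArg Multiset.card (markers_add_unmarked S)
  rw [Multiset.card_add] at h_card
  rw [subtractiveAttack, Multiset.card_add, card_subsample, card_subsample]
  omega

lemma le_additiveAttack (B : ℕ → Finset ℕ) (idx : Finset ℕ → ℕ) (η : ℝ) (S : Multiset (ℕ × ℕ)) :
    S ≤ additiveAttack B idx η S := by
  rw [additiveAttack, add_assoc]
  exact Multiset.le_add_right _ _

lemma card_additiveAttack (B : ℕ → Finset ℕ) (idx : Finset ℕ → ℕ) (η : ℝ)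
    (S : Multiset (ℕ × ℕ)) :
    (additiveAttack B idx η S).card = S.card + ⌊η * S.card⌋₊ := by
  rw [additiveAttack, Multiset.card_add, Multiset.card_add, card_subsample, decoys,
    Multiset.card_map, Multiset.card_replicate]
  omega

variable {n : ℕ} {B : ℕ → Finset ℕ} {idx : Finset ℕ → ℕ}

lemma markers_map_samplePoint (h : Fin n → Bool) (ω : Multiset (Option (Fin n))) :
    markers (ω.map (samplePoint idx h))
      = Multiset.replicate (ω.count none) (idx (codeSet h), 4) := by
  have h_label : ∀ a ∈ ω, ((fun y : ℕ × ℕ => y.2 = 4) ∘ samplePoint idx h) a ↔ none = a := by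
    rintro (_ | x) - <;> simp [samplePoint]
  rw [markers, Multiset.filter_map, Multiset.filter_congr h_label, Multiset.filter_eq,
    Multiset.map_replicate]
  rfl

lemma unmarked_map_samplePoint_flipUnseen (h : Fin n → Bool) (ω : Multiset (Option (Fin n))) :
    unmarked (ω.map (samplePoint idx (flipUnseen ω h))) = unmarked (ω.map (samplePoint idx h)) := by
  have h_label (h : Fin n → Bool) :
      ((fun y : ℕ × ℕ => ¬ y.2 = 4) ∘ samplePoint idx h) = (· ≠ none) := by
    funext a
    cases a <;> simp [samplePoint]
  simp only [unmarked, Multiset.filter_map, h_label]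
  refine Multiset.map_congr rfl fun a ha => ?_
  obtain ⟨h_mem, h_ne⟩ := Multiset.mem_filter.1 ha
  obtain ⟨x, rfl⟩ := Option.ne_none_iff_exists'.1 h_ne
  simp [samplePoint, flipUnseen, h_mem]

lemma map_samplePoint_eq (h : Fin n → Bool) (ω : Multiset (Option (Fin n))) :
    ω.map (samplePoint idx h) = Multiset.replicate (ω.count none) (idx (codeSet h), 4)
      + unmarked (ω.map (samplePoint idx h)) := by
  rw [← markers_map_samplePoint, markers_add_unmarked]

lemma hidesCode_subtractiveAttack (η : ℝ) : HidesCode idx η (subtractiveAttack η) := by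
  intro n h ω h_count
  have h_attack (h : Fin n → Bool) : subtractiveAttack η (ω.map (samplePoint idx h))
      = subsample (unmarked (ω.map (samplePoint idx h))) (ω.card - ⌊η * ω.card⌋₊) := by
    have h_card := congrArg Multiset.card (map_samplePoint_eq (idx := idx) h ω)
    rw [Multiset.card_add, Multiset.card_replicate, Multiset.card_map] at h_card
    rw [subtractiveAttack, Multiset.card_map, Nat.sub_eq_zero_of_le (n := ω.card - _) (by omega),
      subsample_zero, add_zero]
  rw [h_attack, h_attack, unmarked_map_samplePoint_flipUnseen]

lemma flipUnseenSet_codeSet (h : Fin n → Bool) (ω : Multiset (Option (Fin n))) :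
    flipUnseenSet (ω.map (samplePoint idx h)) (codeSet h) = codeSet (flipUnseen ω h) := by
  rw [flipUnseenSet, codeSet, Finset.image_image, codeSet]
  refine Finset.image_congr fun x _ => ?_
  have h_seen : (Nat.bit (h x) x, 3) ∈ ω.map (samplePoint idx h) ↔ some x ∈ ω :=
    Multiset.mem_map_of_injective (samplePoint_injective idx h) (a := some x)
  by_cases hx : some x ∈ ω
  · simp only [Function.comp_apply, h_seen, hx, if_true, flipUnseen]
  · simp only [Function.comp_apply, h_seen, hx, if_false, flipUnseen]
    simpa using Nat.xor_bit (h x) x true 0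

lemma decoys_map_samplePoint (hidx : Function.RightInverse idx B) (h : Fin n → Bool)
    (ω : Multiset (Option (Fin n))) :
    decoys B idx (ω.map (samplePoint idx h))
      = Multiset.replicate (ω.count none) (idx (codeSet (flipUnseen ω h)), 4) := by
  rw [decoys, markers_map_samplePoint, Multiset.map_replicate, hidx, flipUnseenSet_codeSet]

lemma hidesCode_additiveAttack (hidx : Function.RightInverse idx B) (η : ℝ) :
    HidesCode idx η (additiveAttack B idx η) := by
  intro n h ω h_count
  have h_attack (h : Fin n → Bool) : additiveAttack B idx η (ω.map (samplePoint idx h))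
      = Multiset.replicate (ω.count none) (idx (codeSet h), 4)
        + unmarked (ω.map (samplePoint idx h))
        + Multiset.replicate (ω.count none) (idx (codeSet (flipUnseen ω h)), 4)
        + Multiset.replicate (⌊η * ω.card⌋₊ - ω.count none) (0, 0) := by
    rw [additiveAttack, decoys_map_samplePoint hidx, markers_map_samplePoint, Multiset.card_map,
      Multiset.card_replicate, subsample_of_card_le (by simpa using h_count),
      ← map_samplePoint_eq]
  rw [h_attack, h_attack, unmarked_map_samplePoint_flipUnseen, flipUnseen_involutive ω h]
  abel

end Attacks

lemma exists_mem_Ioo_lt_of_continuousOn {f : ℝ → ℝ} {a b c : ℝ} (hab : a < b)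
    (hf : ContinuousOn f (Set.Icc a b)) (hc : f a < c) : ∃ x ∈ Set.Ioo a b, f x < c := by
  have h_near : ∀ᶠ x in nhdsWithin a (Set.Ioo a b), f x < c :=
    ((hf a (Set.left_mem_Icc.2 hab.le)).mono Set.Ioo_subset_Icc_self).eventually_lt_const hc
  have := left_nhdsWithin_Ioo_neBot hab
  exact (eventually_mem_nhdsWithin.and h_near).exists

theorem stmt14_general (B : ℕ → Finset ℕ) (hB : Function.Surjective B) (f : ℝ → ℝ)
    (hf : ∃ η ∈ Set.Ioo (0 : ℝ) 1, f η < 1 / 2) :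
    ∃ k : ℕ, ∀ g : ℕ → ℕ, Monotone g → k ≤ g 1 →
      (∃ A : Multiset (ℕ × ℕ) → PMF (ℕ × ℕ),
        ∀ p ∈ Cg B g, ∀ ε δ : ℝ, 0 < ε → 0 < δ → δ < 1 →
          ∀ m : ℕ, Real.log (1 / δ) * (g ⌈1 / ε⌉₊ : ℝ) ≤ m →
            1 - ENNReal.ofReal δ ≤ probEvent (iid p m) {S | tv (A S) p ≤ ε}) ∧
      (¬ AdditivelyFRobustlyLearnable (Cg B g) f ∧
        ∃ (V : Adversary (ℕ × ℕ)) (η : ℝ), 0 < η ∧ η < 1 ∧ IsAdditive V ∧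
          FixedBudgetAdd V η ∧ ¬ FRobustlyLearnableWrt (Cg B g) f V η) ∧
      (¬ SubtractivelyFRobustlyLearnable (Cg B g) f ∧
        ∃ (V : Adversary (ℕ × ℕ)) (η : ℝ), 0 < η ∧ η < 1 ∧ IsSubtractive V ∧
          FixedBudgetSub V η ∧ ¬ FRobustlyLearnableWrt (Cg B g) f V η) := by
  obtain ⟨η, ⟨hη, hη1⟩, hfη⟩ := hf
  have hf_gap : 0 < 1 - 2 * f η := by linarith
  obtain ⟨k, hk⟩ := exists_nat_gt (max 1 (max (4 / η) (4 / (1 - 2 * f η))))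
  simp only [max_lt_iff, div_lt_iff₀' hη, div_lt_iff₀' hf_gap] at hk
  obtain ⟨idx, hidx⟩ := hB.hasRightInverse
  refine ⟨k, fun g hg hkg => ?_⟩
  have hkg' : (k : ℝ) ≤ g 1 := by exact_mod_cast hkg
  have h_hidden (v) (hv : HidesCode idx η v) :
      ¬ FRobustlyLearnableWrt (Cg B g) f (fun S => PMF.pure (v S)) η := fun ⟨A, mc, hA⟩ =>
    not_robustLearnerFor_of_hidesCode hidx hη (by exact_mod_cast hk.1.trans_le hkg')
      (hk.2.1.trans_le (by gcongr)) (hk.2.2.trans_le (by gcongr)) hv A mc hA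
  have h_add := h_hidden _ (hidesCode_additiveAttack hidx η)
  have h_sub := h_hidden _ (hidesCode_subtractiveAttack η)
  have h_additive := isAdditive_pure (le_additiveAttack B idx η)
  have h_budget_add := fixedBudgetAdd_pure hη.le (card_additiveAttack B idx η)
  have h_subtractive := isSubtractive_pure (subtractiveAttack_le η)
  have h_budget_sub := fixedBudgetSub_pure hη.le hη1.le (card_subtractiveAttack η)
  refine ⟨⟨markerLearner B g, fun p hp ε δ hε hδ hδ1 m => markerLearner_learns hg hp hε hδ hδ1⟩,
    ⟨fun ⟨A, mc, hA⟩ => h_add ⟨A, mc, hA _ η hη hη1 h_additive h_budget_add⟩,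
      _, η, hη, hη1, h_additive, h_budget_add, h_add⟩,
    ⟨fun ⟨A, mc, hA⟩ => h_sub ⟨A, mc, hA _ η hη hη1 h_subtractive h_budget_sub⟩,
      _, η, hη, hη1, h_subtractive, h_budget_sub, h_sub⟩⟩

/-- For every continuous, strictly increasing `f : [0,1] → [0,1]` with
`f(0) = 0`, there is a monotone `g` such that `C_g` is realizably PAC learnable with sample
complexity `log(1/δ)·g(1/ε)`, but is neither adaptively additively nor adaptively
subtractively f-robustly learnable, and universal additive and subtractive f-adversaries
for `C_g` exist. -/
theorem stmt14 (B : ℕ → Finset ℕ) (hB : Function.Surjective B)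
    (f : ℝ → ℝ) (hf0 : f 0 = 0) (hfc : ContinuousOn f (Set.Icc 0 1))
    (hfm : StrictMonoOn f (Set.Icc 0 1))
    (hfmap : ∀ x ∈ Set.Icc (0 : ℝ) 1, f x ∈ Set.Icc (0 : ℝ) 1) :
    ∃ g : ℕ → ℕ, Monotone g ∧
      (∃ A : Multiset (ℕ × ℕ) → PMF (ℕ × ℕ),
        ∀ p ∈ Cg B g, ∀ ε δ : ℝ, 0 < ε → ε < 1 → 0 < δ → δ < 1 →
          ∀ m : ℕ, Real.log (1 / δ) * (g ⌈1 / ε⌉₊ : ℝ) ≤ m →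
            1 - ENNReal.ofReal δ ≤ probEvent (iid p m) {S | tv (A S) p ≤ ε}) ∧
      (¬ AdditivelyFRobustlyLearnable (Cg B g) f ∧
        ∃ (V : Adversary (ℕ × ℕ)) (η : ℝ), 0 < η ∧ η < 1 ∧ IsAdditive V ∧
          FixedBudgetAdd V η ∧ ¬ FRobustlyLearnableWrt (Cg B g) f V η) ∧
      (¬ SubtractivelyFRobustlyLearnable (Cg B g) f ∧
        ∃ (V : Adversary (ℕ × ℕ)) (η : ℝ), 0 < η ∧ η < 1 ∧ IsSubtractive V ∧
          FixedBudgetSub V η ∧ ¬ FRobustlyLearnableWrt (Cg B g) f V η) := by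
  obtain ⟨k, hk⟩ := stmt14_general B hB f
    (exists_mem_Ioo_lt_of_continuousOn one_pos hfc (hf0.trans_lt one_half_pos))
  have h_mono : Monotone (· + k) := monotone_id.add_const k
  obtain ⟨⟨A, hA⟩, h_attacks⟩ := hk _ h_mono (Nat.le_add_left k 1)
  exact ⟨_, h_mono, ⟨A, fun p hp ε δ hε _ => hA p hp ε δ hε⟩, h_attacks⟩
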